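/- arXiv:1010.5967 — 3 statements merged into one kernel-verified Lean document; each statement's English description precedes it below -/
import Mathlib

section
/- Let β ≥ 0, δ > 0, λ ≥ 0 and let ξ be a nonzero real number. Set p = 1 − βξ²δ − ξ²δ²/(2(1 + λ²ξ²)) and c = (1 − βξ²δ)². Then the (quarter-)discriminant p² − c of the EPB characteristic quadratic q² − 2pq + c has the same sign as F(δ) = δ² + 4β(1 + λ²ξ²)δ − 4(1 + λ²ξ²)/ξ²; in particular p² − c ≤ 0 if and only if F(δ) ≤ 0, and p² − c = (ξ⁴δ²/(4(1 + λ²ξ²)²))·F(δ). -/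
/-- The quarter-discriminant `p² − c` of the EPB characteristic quadratic,
with `p = 1 − βξ²δ − ξ²δ²/(2(1 + λ²ξ²))` and `c = (1 − βξ²δ)²`,
has the same sign as `F(δ) = δ² + 4β(1 + λ²ξ²)δ − 4(1 + λ²ξ²)/ξ²`:
it equals `(ξ⁴δ²/(4(1 + λ²ξ²)²))·F(δ)`, and is nonpositive iff `F(δ) ≤ 0`. -/
theorem epb_discriminant_sign (β δ lam ξ : ℝ) (hβ : 0 ≤ β) (hδ : 0 < δ) (hlam : 0 ≤ lam)
    (hξ : ξ ≠ 0) :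
    ((1 - β * ξ ^ 2 * δ - ξ ^ 2 * δ ^ 2 / (2 * (1 + lam ^ 2 * ξ ^ 2))) ^ 2
        - (1 - β * ξ ^ 2 * δ) ^ 2 ≤ 0
      ↔ δ ^ 2 + 4 * β * (1 + lam ^ 2 * ξ ^ 2) * δ - 4 * (1 + lam ^ 2 * ξ ^ 2) / ξ ^ 2 ≤ 0)
    ∧ (1 - β * ξ ^ 2 * δ - ξ ^ 2 * δ ^ 2 / (2 * (1 + lam ^ 2 * ξ ^ 2))) ^ 2
        - (1 - β * ξ ^ 2 * δ) ^ 2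
      = (ξ ^ 4 * δ ^ 2 / (4 * (1 + lam ^ 2 * ξ ^ 2) ^ 2))
          * (δ ^ 2 + 4 * β * (1 + lam ^ 2 * ξ ^ 2) * δ - 4 * (1 + lam ^ 2 * ξ ^ 2) / ξ ^ 2) := by
  have hD : 0 < 1 + lam ^ 2 * ξ ^ 2 := by positivity
  generalize 1 + lam ^ 2 * ξ ^ 2 = D at hD ⊢
  have factorization : (1 - β * ξ ^ 2 * δ - ξ ^ 2 * δ ^ 2 / (2 * D)) ^ 2
        - (1 - β * ξ ^ 2 * δ) ^ 2
      = (ξ ^ 4 * δ ^ 2 / (4 * D ^ 2)) * (δ ^ 2 + 4 * β * D * δ - 4 * D / ξ ^ 2) := by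
    field_simp
    ring
  have hfactor : 0 < ξ ^ 4 * δ ^ 2 / (4 * D ^ 2) := by positivity
  exact ⟨by rw [factorization, ← smul_eq_mul, smul_nonpos_iff_nonpos_of_pos_left hfactor], factorization⟩
end

section
/- Let β ≥ 0, δ > 0, λ ≠ 0 and let ξ be a nonzero real number. Set p = 1 − βξ²δ + λ²ξ⁴δ²/(2(1 + λ²ξ²)) and c = (1 − βξ²δ)² + ξ²δ². Then the (quarter-)discriminant p² − c of the REPB characteristic quadratic q² − 2pq + c has the same sign as F(δ) = δ² − 4β((1 + λ²ξ²)/(λ²ξ²))δ − 4(1 + λ²ξ²)/(λ⁴ξ⁶); in particular p² − c ≤ 0 if and only if F(δ) ≤ 0, and p² − c = (λ⁴ξ⁸δ²/(4(1 + λ²ξ²)²))·F(δ). -/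
/-- The quarter-discriminant `p² − c` of the REPB characteristic quadratic,
with `p = 1 − βξ²δ + λ²ξ⁴δ²/(2(1 + λ²ξ²))` and `c = (1 − βξ²δ)² + ξ²δ²`,
has the same sign as `F(δ) = δ² − 4β((1 + λ²ξ²)/(λ²ξ²))δ − 4(1 + λ²ξ²)/(λ⁴ξ⁶)`:
it equals `(λ⁴ξ⁸δ²/(4(1 + λ²ξ²)²))·F(δ)`, and is nonpositive iff `F(δ) ≤ 0`. -/
theorem repb_discriminant_sign (β δ lam ξ : ℝ) (hβ : 0 ≤ β) (hδ : 0 < δ) (hlam : lam ≠ 0)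
    (hξ : ξ ≠ 0) :
    ((1 - β * ξ ^ 2 * δ + lam ^ 2 * ξ ^ 4 * δ ^ 2 / (2 * (1 + lam ^ 2 * ξ ^ 2))) ^ 2
        - ((1 - β * ξ ^ 2 * δ) ^ 2 + ξ ^ 2 * δ ^ 2) ≤ 0
      ↔ δ ^ 2 - 4 * β * ((1 + lam ^ 2 * ξ ^ 2) / (lam ^ 2 * ξ ^ 2)) * δ
          - 4 * (1 + lam ^ 2 * ξ ^ 2) / (lam ^ 4 * ξ ^ 6) ≤ 0)
    ∧ (1 - β * ξ ^ 2 * δ + lam ^ 2 * ξ ^ 4 * δ ^ 2 / (2 * (1 + lam ^ 2 * ξ ^ 2))) ^ 2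
        - ((1 - β * ξ ^ 2 * δ) ^ 2 + ξ ^ 2 * δ ^ 2)
      = (lam ^ 4 * ξ ^ 8 * δ ^ 2 / (4 * (1 + lam ^ 2 * ξ ^ 2) ^ 2))
          * (δ ^ 2 - 4 * β * ((1 + lam ^ 2 * ξ ^ 2) / (lam ^ 2 * ξ ^ 2)) * δ
              - 4 * (1 + lam ^ 2 * ξ ^ 2) / (lam ^ 4 * ξ ^ 6)) := by
  have hK : 0 < lam ^ 4 * ξ ^ 8 * δ ^ 2 / (4 * (1 + lam ^ 2 * ξ ^ 2) ^ 2) := by positivity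
  refine (fun h => ⟨?iff, h⟩) ?factorization
  case factorization =>
    field_simp
    ring
  case iff => rw [h, ← not_lt, ← not_lt, mul_pos_iff_of_pos_left hK]
end

section
/- Let β > 0, δ > 0, λ ≥ 0 and let ξ be a nonzero real number. If δ ≤ 1/(2βξ²) and δ ≤ √2·√(1 + λ²ξ²)/|ξ|, then F(δ) = δ² + 4β(1 + λ²ξ²)δ − 4(1 + λ²ξ²)/ξ² ≤ 0. -/
/-- Sufficient condition for the nonpositivity of the EPB discriminant quantity
`F(δ) = δ² + 4β(1 + λ²ξ²)δ − 4(1 + λ²ξ²)/ξ²`. -/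
theorem epb_F_nonpos (β δ lam ξ : ℝ) (hβ : 0 < β) (hδ : 0 < δ) (hlam : 0 ≤ lam) (hξ : ξ ≠ 0)
    (h1 : δ ≤ 1 / (2 * β * ξ ^ 2))
    (h2 : δ ≤ Real.sqrt 2 * Real.sqrt (1 + lam ^ 2 * ξ ^ 2) / |ξ|) :
    δ ^ 2 + 4 * β * (1 + lam ^ 2 * ξ ^ 2) * δ - 4 * (1 + lam ^ 2 * ξ ^ 2) / ξ ^ 2 ≤ 0 := by
  have hA : 0 < 1 + lam ^ 2 * ξ ^ 2 := by positivity
  generalize 1 + lam ^ 2 * ξ ^ 2 = A at *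
  have hsq : δ ^ 2 ≤ 2 * A / ξ ^ 2 := by
    calc δ ^ 2 ≤ (Real.sqrt 2 * Real.sqrt A / |ξ|) ^ 2 := by gcongr
      _ = 2 * A / ξ ^ 2 := by
        rw [div_pow, mul_pow, Real.sq_sqrt zero_le_two, Real.sq_sqrt hA.le, sq_abs]
  have hlin : 4 * β * A * δ ≤ 2 * A / ξ ^ 2 := by
    calc 4 * β * A * δ ≤ 4 * β * A * (1 / (2 * β * ξ ^ 2)) := by gcongr
      _ = 2 * A / ξ ^ 2 := by
        field_simp
        norm_num
  have hsum : 4 * A / ξ ^ 2 = 2 * A / ξ ^ 2 + 2 * A / ξ ^ 2 := by ring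
  linarith
end
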